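/- arXiv:2010.02490 — 8 statements merged into one kernel-verified Lean document; each statement's English description precedes it below -/
import Mathlib

section
/- Define, for a positive integer n, L_B(n) = 2n·sin(π/(2n))·cos(π/(2n) − (1/2)·arcsin((1/2)·sin(2π/n))) and U_L(n) = 2n·sin(π/(2n)). Then, as n → ∞ over the positive integers, U_L(n) − L_B(n) = π⁷/(32n⁶) + 11π⁹/(768n⁸) + O(1/n¹⁰); that is, the function n ↦ 2n·sin(π/(2n)) − 2n·sin(π/(2n))·cos(π/(2n) − (1/2)·arcsin((1/2)·sin(2π/n))) − π⁷/(32n⁶) − 11π⁹/(768n⁸) is O(n⁻¹⁰) along the filter atTop. -/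
open Real Filter Asymptotics

/-!
Put `x = π / n` and let `δ x = x / 2 - arcsin (sin (2 * x) / 2) / 2`, so that the gap equals
`n * (2 * sin (x / 2) * (1 - cos (δ x)))`. Since `sin (x - x ^ 3 / 2 - x ^ 5 / 8)` agrees with
`sin (2 * x) / 2` up to `O(x ^ 7)` and `arcsin` is Lipschitz near `0`, the linear terms of `δ`
cancel: `δ x = x ^ 3 / 4 + x ^ 5 / 16 + O(x ^ 7)`. Hence `1 - cos (δ x)` is, up to `O(x ^ 10)`, half
the square of that polynomial, and multiplying by `2 * sin (x / 2) = x - x ^ 3 / 24 + O(x ^ 5)`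
gives both coefficients.
-/

open scoped Topology Nat

section PowersAtZero

variable {𝕜 : Type*} [NormedField 𝕜]

theorem pow_mul_isBigO_pow {q : 𝕜 → 𝕜} (k : ℕ) (hq : ContinuousAt q 0) :
    (fun x ↦ x ^ k * q x) =O[𝓝 0] fun x ↦ x ^ k := by
  simpa using (isBigO_refl (fun x : 𝕜 ↦ x ^ k) (𝓝 0)).mul (hq.isBigO_one 𝕜)

theorem pow_isBigO_pow_of_le {j k : ℕ} (h : k ≤ j) :
    (fun x : 𝕜 ↦ x ^ j) =O[𝓝 0] fun x ↦ x ^ k := by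
  simpa [← pow_add, h] using
    pow_mul_isBigO_pow (𝕜 := 𝕜) k (continuous_pow (j - k)).continuousAt

theorem mul_sub_mul_isBigO_pow {f f₀ g g₀ : 𝕜 → 𝕜} (a b j : ℕ)
    (hf₀ : f₀ =O[𝓝 0] fun x ↦ x ^ a) (hg₀ : g₀ =O[𝓝 0] fun x ↦ x ^ b)
    (hf : (fun x ↦ f x - f₀ x) =O[𝓝 0] fun x ↦ x ^ (a + j))
    (hg : (fun x ↦ g x - g₀ x) =O[𝓝 0] fun x ↦ x ^ (b + j)) :
    (fun x ↦ f x * g x - f₀ x * g₀ x) =O[𝓝 0] fun x ↦ x ^ (a + b + j) := by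
  have hg_order : g =O[𝓝 0] fun x ↦ x ^ b := by
    simpa using (hg.trans (pow_isBigO_pow_of_le (Nat.le_add_right b j))).add hg₀
  have hleft : (fun x ↦ (f x - f₀ x) * g x) =O[𝓝 0] fun x ↦ x ^ (a + b + j) :=
    (hf.mul hg_order).congr_right fun x ↦ by ring
  have hright : (fun x ↦ f₀ x * (g x - g₀ x)) =O[𝓝 0] fun x ↦ x ^ (a + b + j) :=
    (hf₀.mul hg).congr_right fun x ↦ by ring
  exact (hleft.add hright).congr_left fun x ↦ by ring

end PowersAtZero

section SineCosine

theorem sum_range_two_mul_mul_I_pow_div_factorial (y : ℝ) (n : ℕ) :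
    ∑ m ∈ Finset.range (2 * n), ((y : ℂ) * Complex.I) ^ m / m ! =
      (∑ k ∈ Finset.range n, (-1) ^ k * y ^ (2 * k) / (2 * k)! : ℝ) +
        (∑ k ∈ Finset.range n, (-1) ^ k * y ^ (2 * k + 1) / (2 * k + 1)! : ℝ) * Complex.I := by
  induction n with
  | zero => simp
  | succ n ih =>
    have even_pow : ((y : ℂ) * Complex.I) ^ (2 * n) = (-1) ^ n * y ^ (2 * n) := by
      rw [mul_pow, pow_mul Complex.I, Complex.I_sq, mul_comm]
    rw [Nat.mul_succ, Finset.sum_range_succ, Finset.sum_range_succ, ih, pow_succ, even_pow,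
      Finset.sum_range_succ, Finset.sum_range_succ]
    push_cast
    ring

theorem exp_mul_I_sub_sum_range_isBigO_pow (n : ℕ) :
    (fun y : ℝ ↦ Complex.exp (y * Complex.I) -
      ∑ m ∈ Finset.range n, ((y : ℂ) * Complex.I) ^ m / m !) =O[𝓝 0] fun y ↦ y ^ n := by
  have tendsto_mul_I : Tendsto (fun y : ℝ ↦ (y : ℂ) * Complex.I) (𝓝 0) (𝓝 0) :=
    Continuous.tendsto' (by fun_prop) _ _ (by simp)
  refine ((Complex.exp_sub_sum_range_isBigO_pow n).comp_tendsto tendsto_mul_I).trans ?_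
  exact isBigO_of_le _ fun y ↦ by simp

theorem sin_sub_sum_range_isBigO_pow (n : ℕ) :
    (fun y ↦ sin y - ∑ k ∈ Finset.range n, (-1) ^ k * y ^ (2 * k + 1) / (2 * k + 1)!)
      =O[𝓝 0] fun y ↦ y ^ (2 * n + 1) := by
  refine (isBigO_of_le _ fun y ↦ ?_).trans (exp_mul_I_sub_sum_range_isBigO_pow (2 * n + 1))
  have last_im : (((y : ℂ) * Complex.I) ^ (2 * n) / (2 * n)!).im = 0 := by
    rw [mul_pow, pow_mul Complex.I, Complex.I_sq]
    norm_cast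
  have sum_im : (∑ m ∈ Finset.range (2 * n + 1), ((y : ℂ) * Complex.I) ^ m / m !).im =
      ∑ k ∈ Finset.range n, (-1) ^ k * y ^ (2 * k + 1) / (2 * k + 1)! := by
    rw [Finset.sum_range_succ, Complex.add_im, last_im,
      sum_range_two_mul_mul_I_pow_div_factorial, Complex.add_im, Complex.ofReal_im,
      Complex.im_ofReal_mul, Complex.I_im, mul_one, zero_add, add_zero]
  simpa only [norm_eq_abs, Complex.sub_im, Complex.exp_ofReal_mul_I_im, sum_im] using
    Complex.abs_im_le_norm (Complex.exp (y * Complex.I) -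
      ∑ m ∈ Finset.range (2 * n + 1), ((y : ℂ) * Complex.I) ^ m / m !)

theorem cos_sub_sum_range_isBigO_pow (n : ℕ) :
    (fun y ↦ cos y - ∑ k ∈ Finset.range n, (-1) ^ k * y ^ (2 * k) / (2 * k)!)
      =O[𝓝 0] fun y ↦ y ^ (2 * n) := by
  refine (isBigO_of_le _ fun y ↦ ?_).trans (exp_mul_I_sub_sum_range_isBigO_pow (2 * n))
  have sum_re : (∑ m ∈ Finset.range (2 * n), ((y : ℂ) * Complex.I) ^ m / m !).re =
      ∑ k ∈ Finset.range n, (-1) ^ k * y ^ (2 * k) / (2 * k)! := by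
    rw [sum_range_two_mul_mul_I_pow_div_factorial, Complex.add_re, Complex.ofReal_re,
      Complex.re_ofReal_mul, Complex.I_re, mul_zero, add_zero]
  simpa only [norm_eq_abs, Complex.sub_re, Complex.exp_ofReal_mul_I_re, sum_re] using
    Complex.abs_re_le_norm (Complex.exp (y * Complex.I) -
      ∑ m ∈ Finset.range (2 * n), ((y : ℂ) * Complex.I) ^ m / m !)

theorem sin_sub_quintic_isBigO :
    (fun y ↦ sin y - (y - y ^ 3 / 6 + y ^ 5 / 120)) =O[𝓝 0] fun y ↦ y ^ 7 :=
  (sin_sub_sum_range_isBigO_pow 3).congr_left fun y ↦ by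
    norm_num [Finset.sum_range_succ, Nat.factorial]
    ring

theorem sin_sub_cubic_isBigO :
    (fun y ↦ sin y - (y - y ^ 3 / 6)) =O[𝓝 0] fun y ↦ y ^ 5 :=
  (sin_sub_sum_range_isBigO_pow 2).congr_left fun y ↦ by
    norm_num [Finset.sum_range_succ, Nat.factorial]
    ring

theorem cos_sub_quadratic_isBigO :
    (fun y ↦ cos y - (1 - y ^ 2 / 2)) =O[𝓝 0] fun y ↦ y ^ 4 :=
  (cos_sub_sum_range_isBigO_pow 2).congr_left fun y ↦ by
    norm_num [Finset.sum_range_succ, Nat.factorial]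
    ring

end SineCosine

section Arcsine

theorem arcsin_sub_isBigO_of_sub_sin {α E : Type*} [Norm E] {l : Filter α} {f p : α → ℝ}
    {g : α → E} {y : ℝ} (hy : y ∈ Set.Ioo (-(π / 2)) (π / 2)) (hf : Tendsto f l (𝓝 (sin y)))
    (hp : Tendsto p l (𝓝 y)) (h : (fun x ↦ f x - sin (p x)) =O[l] g) :
    (fun x ↦ arcsin (f x) - p x) =O[l] g := by
  have sin_y_mem := mapsTo_sin_Ioo hy
  have lipschitz_near := (hasStrictDerivAt_arcsin sin_y_mem.1.ne' sin_y_mem.2.ne).isBigO_sub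
  have tendsto_pair : Tendsto (fun x ↦ (f x, sin (p x))) l (𝓝 (sin y, sin y)) :=
    hf.prodMk_nhds ((continuous_sin.tendsto y).comp hp)
  refine ((lipschitz_near.comp_tendsto tendsto_pair).trans h).congr' ?_ .rfl
  filter_upwards [hp.eventually (Ioo_mem_nhds hy.1 hy.2)] with x hx
  simp only [Function.comp_apply, arcsin_sin hx.1.le hx.2.le]

theorem sin_quintic_sub_isBigO :
    (fun x ↦ sin (x - x ^ 3 / 2 - x ^ 5 / 8) - (x - 2 * x ^ 3 / 3 + 2 * x ^ 5 / 15))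
      =O[𝓝 0] fun x ↦ x ^ 7 := by
  set p : ℝ → ℝ := fun x ↦ x - x ^ 3 / 2 - x ^ 5 / 8
  set r : ℝ → ℝ := fun x ↦ 1 / 2 + x ^ 2 / 8
  have p_eq (x : ℝ) : p x = x * (1 - x ^ 2 * r x) := by simp only [p, r]; ring
  have p_tendsto : Tendsto p (𝓝 0) (𝓝 0) :=
    Continuous.tendsto' (by fun_prop) _ _ (by simp [p])
  have p_order : p =O[𝓝 0] fun x ↦ x :=
    (pow_mul_isBigO_pow 1 (q := fun x ↦ 1 - x ^ 2 * r x) (by fun_prop)).congr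
      (fun x ↦ by rw [p_eq]; ring) fun x ↦ pow_one x
  have p_cube : (fun x ↦ p x ^ 3 - (x ^ 3 - 3 * x ^ 5 / 2)) =O[𝓝 0] fun x ↦ x ^ 7 :=
    (pow_mul_isBigO_pow 7 (q := fun x ↦ -3 / 8 + 3 * r x ^ 2 - x ^ 2 * r x ^ 3)
      (by fun_prop)).congr_left fun x ↦ by rw [p_eq]; simp only [r]; ring
  have p_fifth : (fun x ↦ p x ^ 5 - x ^ 5) =O[𝓝 0] fun x ↦ x ^ 7 :=
    (pow_mul_isBigO_pow 7 (q := fun x ↦ -5 * r x + 10 * x ^ 2 * r x ^ 2 -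
      10 * x ^ 4 * r x ^ 3 + 5 * x ^ 6 * r x ^ 4 - x ^ 8 * r x ^ 5)
      (by fun_prop)).congr_left fun x ↦ by rw [p_eq]; ring
  have sin_p := (sin_sub_quintic_isBigO.comp_tendsto p_tendsto).trans (p_order.pow 7)
  refine ((sin_p.sub (p_cube.const_mul_left (1 / 6))).add
    (p_fifth.const_mul_left (1 / 120))).congr_left fun x ↦ ?_
  simp only [Function.comp_apply, p]
  ring

theorem half_mul_sin_two_mul_sub_isBigO :
    (fun x ↦ 1 / 2 * sin (2 * x) - (x - 2 * x ^ 3 / 3 + 2 * x ^ 5 / 15))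
      =O[𝓝 0] fun x ↦ x ^ 7 := by
  have two_mul_tendsto : Tendsto (fun x : ℝ ↦ 2 * x) (𝓝 0) (𝓝 0) :=
    Continuous.tendsto' (by fun_prop) _ _ (by simp)
  have two_mul_order : (fun x : ℝ ↦ 2 * x) =O[𝓝 0] fun x ↦ x := isBigO_const_mul_self 2 _ _
  refine (((sin_sub_quintic_isBigO.comp_tendsto two_mul_tendsto).trans
    (two_mul_order.pow 7)).const_mul_left (1 / 2)).congr_left fun x ↦ ?_
  simp only [Function.comp_apply]
  ring

theorem arcsin_half_mul_sin_two_mul_sub_isBigO :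
    (fun x ↦ arcsin (1 / 2 * sin (2 * x)) - (x - x ^ 3 / 2 - x ^ 5 / 8))
      =O[𝓝 0] fun x ↦ x ^ 7 := by
  refine arcsin_sub_isBigO_of_sub_sin (y := 0) ⟨by linarith [pi_pos], by linarith [pi_pos]⟩
    (Continuous.tendsto' (by fun_prop) _ _ (by simp))
    (Continuous.tendsto' (by fun_prop) _ _ (by simp)) ?_
  exact half_mul_sin_two_mul_sub_isBigO.triangle sin_quintic_sub_isBigO.symm

end Arcsine

section PerimeterGap

/-- The angle `δ`, as a function of `x = π / n`, for which the perimeter of `B_n` is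
`2 * n * sin (π / (2 * n)) * cos δ`. -/
noncomputable def deviationAngle (x : ℝ) : ℝ :=
  x / 2 - 1 / 2 * arcsin (1 / 2 * sin (2 * x))

theorem tendsto_deviationAngle_zero : Tendsto deviationAngle (𝓝 0) (𝓝 0) := by
  unfold deviationAngle
  exact Continuous.tendsto' (by fun_prop) _ _ (by simp)

theorem deviationAngle_sub_isBigO :
    (fun x ↦ deviationAngle x - (x ^ 3 / 4 + x ^ 5 / 16)) =O[𝓝 0] fun x ↦ x ^ 7 :=
  (arcsin_half_mul_sin_two_mul_sub_isBigO.const_mul_left (-1 / 2)).congr_left fun x ↦ by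
    rw [deviationAngle]
    ring

theorem one_sub_cos_deviationAngle_sub_isBigO :
    (fun x ↦ 1 - cos (deviationAngle x) - (x ^ 6 / 32 + x ^ 8 / 64)) =O[𝓝 0] fun x ↦ x ^ 10 := by
  have leading : (fun x : ℝ ↦ x ^ 3 / 4 + x ^ 5 / 16) =O[𝓝 0] fun x ↦ x ^ 3 :=
    (pow_mul_isBigO_pow 3 (q := fun x ↦ 1 / 4 + x ^ 2 / 16) (by fun_prop)).congr_left
      fun x ↦ by ring
  have angle_order : deviationAngle =O[𝓝 0] fun x ↦ x ^ 3 := by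
    simpa using (deviationAngle_sub_isBigO.trans (pow_isBigO_pow_of_le (by norm_num))).add leading
  have angle_sq := mul_sub_mul_isBigO_pow 3 3 4 leading leading
    deviationAngle_sub_isBigO deviationAngle_sub_isBigO
  have cos_angle : (fun x ↦ cos (deviationAngle x) - (1 - deviationAngle x ^ 2 / 2))
      =O[𝓝 0] fun x ↦ x ^ 10 :=
    ((cos_sub_quadratic_isBigO.comp_tendsto tendsto_deviationAngle_zero).trans
      (angle_order.pow 4)).trans
        ((pow_isBigO_pow_of_le (by norm_num : 10 ≤ 12)).congr_left fun x ↦ by ring)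
  have tail : (fun x : ℝ ↦ 1 / 512 * x ^ 10) =O[𝓝 0] fun x ↦ x ^ 10 :=
    isBigO_const_mul_self _ _ _
  exact (((angle_sq.const_mul_left (1 / 2)).sub cos_angle).add tail).congr_left fun x ↦ by ring

theorem two_mul_sin_half_sub_isBigO :
    (fun x ↦ 2 * sin (x / 2) - (x - x ^ 3 / 24)) =O[𝓝 0] fun x ↦ x ^ 5 := by
  have half_tendsto : Tendsto (fun x : ℝ ↦ x / 2) (𝓝 0) (𝓝 0) :=
    Continuous.tendsto' (by fun_prop) _ _ (by simp)
  have half_order : (fun x : ℝ ↦ x / 2) =O[𝓝 0] fun x ↦ x :=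
    (isBigO_const_mul_self (1 / 2) _ _).congr_left fun x ↦ by ring
  refine (((sin_sub_cubic_isBigO.comp_tendsto half_tendsto).trans
    (half_order.pow 5)).const_mul_left 2).congr_left fun x ↦ ?_
  simp only [Function.comp_apply]
  ring

theorem two_mul_sin_half_mul_one_sub_cos_deviationAngle_sub_isBigO :
    (fun x ↦ 2 * sin (x / 2) * (1 - cos (deviationAngle x)) - (x ^ 7 / 32 + 11 * x ^ 9 / 768))
      =O[𝓝 0] fun x ↦ x ^ 11 := by
  have sin_leading : (fun x : ℝ ↦ x - x ^ 3 / 24) =O[𝓝 0] fun x ↦ x ^ 1 :=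
    (pow_mul_isBigO_pow 1 (q := fun x ↦ 1 - x ^ 2 / 24) (by fun_prop)).congr_left fun x ↦ by ring
  have cos_leading : (fun x : ℝ ↦ x ^ 6 / 32 + x ^ 8 / 64) =O[𝓝 0] fun x ↦ x ^ 6 :=
    (pow_mul_isBigO_pow 6 (q := fun x ↦ 1 / 32 + x ^ 2 / 64) (by fun_prop)).congr_left
      fun x ↦ by ring
  have product := mul_sub_mul_isBigO_pow 1 6 4 sin_leading cos_leading
    two_mul_sin_half_sub_isBigO one_sub_cos_deviationAngle_sub_isBigO
  have tail : (fun x : ℝ ↦ -1 / 1536 * x ^ 11) =O[𝓝 0] fun x ↦ x ^ 11 :=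
    isBigO_const_mul_self _ _ _
  exact (product.add tail).congr_left fun x ↦ by ring

theorem perimeter_gap_Bn_asymptotics_general :
    (fun t : ℝ ↦
        2 * t * sin (π / (2 * t)) -
          2 * t * sin (π / (2 * t)) *
            cos (π / (2 * t) - (1 / 2) * arcsin ((1 / 2) * sin (2 * π / t))) -
          π ^ 7 / (32 * t ^ 6) - 11 * π ^ 9 / (768 * t ^ 8)) =O[atTop]
      (fun t ↦ 1 / t ^ 10) := by
  have scaled := (isBigO_refl (fun t : ℝ ↦ t) atTop).mul
    (two_mul_sin_half_mul_one_sub_cos_deviationAngle_sub_isBigO.comp_tendsto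
      (tendsto_id.const_div_atTop π))
  have remainder : (fun t : ℝ ↦ t * (π / t) ^ 11) =O[atTop] fun t ↦ 1 / t ^ 10 := by
    refine (isBigO_const_mul_self (π ^ 11) _ _).congr' ?_ .rfl
    filter_upwards [eventually_ne_atTop 0] with t ht
    field_simp
  refine (scaled.trans remainder).congr' ?_ .rfl
  filter_upwards [eventually_ne_atTop 0] with t ht
  have half_angle : π / t / 2 = π / (2 * t) := by field_simp
  have double_angle : 2 * (π / t) = 2 * π / t := by ring
  simp only [Function.comp_apply, id_eq, deviationAngle, half_angle, double_angle]
  field_simp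
  ring

end PerimeterGap

/-- Asymptotics of the perimeter gap for the polygon `B_n`:
`2n sin(π/2n) − L(B_n) = π⁷/(32 n⁶) + 11π⁹/(768 n⁸) + O(1/n¹⁰)` as `n → ∞`. -/
theorem perimeter_gap_Bn_asymptotics :
    (fun n : ℕ =>
        2 * n * sin (π / (2 * n)) -
          2 * n * sin (π / (2 * n)) *
            cos (π / (2 * n) - (1 / 2) * arcsin ((1 / 2) * sin (2 * π / n))) -
          π ^ 7 / (32 * (n : ℝ) ^ 6) - 11 * π ^ 9 / (768 * (n : ℝ) ^ 8)) =O[atTop]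
      (fun n : ℕ => 1 / (n : ℝ) ^ 10) :=
  perimeter_gap_Bn_asymptotics_general.comp_tendsto tendsto_natCast_atTop_atTop
end

section
/- Let n ≥ 3 be an integer, let β be a real number, and let k be a positive integer. Then ∑_{j=1}^{k} (−1)^{j−1}·sin((2j−1)·π/n + (−1)^{j−1}·β) = sin(2kπ/n)·sin(β − (−1)^k·π/n) / sin(2π/n). -/
open Real Finset

/-!
The sum telescopes: multiplied by `sin 2θ`, its term of index `k + 1` is `F (k + 1) - F k`, where
`F k = sin (2kθ) sin (β - (-1)ᵏ θ)` and `F 0 = 0`. With `ε = (-1)ᵏ`, this is the three-angle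
identity `sin (x + y) sin z = sin (x + z) sin y - sin x sin (y - z)` at `x = 2kθ`, `y = θ + εβ`,
`z = 2θ`, the sign `ε` being absorbed by `ε sin (εx) = sin x`.
-/

theorem sin_add_mul_sin (x y z : ℂ) :
    Complex.sin (x + y) * Complex.sin z =
      Complex.sin (x + z) * Complex.sin y - Complex.sin x * Complex.sin (y - z) := by
  rw [Complex.sin_add, Complex.sin_add, Complex.sin_sub]
  ring

theorem neg_one_pow_mul_sin_neg_one_pow_mul (k : ℕ) (x : ℂ) :
    (-1) ^ k * Complex.sin ((-1) ^ k * x) = Complex.sin x := by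
  rcases neg_one_pow_eq_or ℂ k with h | h <;> simp [h]

theorem neg_one_pow_mul_sin_add_neg_one_pow_mul (k : ℕ) (x y : ℂ) :
    (-1) ^ k * Complex.sin (x + (-1) ^ k * y) = Complex.sin (y + (-1) ^ k * x) := by
  have hsq : ((-1 : ℂ) ^ k) * (-1) ^ k = 1 := pow_mul_pow_eq_one k (by norm_num)
  rw [← neg_one_pow_mul_sin_neg_one_pow_mul k (y + _), mul_add, ← mul_assoc, hsq, one_mul,
    add_comm x]

theorem neg_one_pow_mul_sin_mul_sin_two_mul (θ β : ℂ) (k : ℕ) :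
    (-1) ^ k * Complex.sin ((2 * k + 1) * θ + (-1) ^ k * β) * Complex.sin (2 * θ) =
      Complex.sin (2 * (k + 1) * θ) * Complex.sin (β - (-1) ^ (k + 1) * θ) -
        Complex.sin (2 * k * θ) * Complex.sin (β - (-1) ^ k * θ) := by
  have hnext : (-1) ^ k * Complex.sin (θ + (-1) ^ k * β) =
      Complex.sin (β - (-1) ^ (k + 1) * θ) := by
    rw [neg_one_pow_mul_sin_add_neg_one_pow_mul]
    ring_nf
  have hprev : (-1) ^ k * Complex.sin (θ + (-1) ^ k * β - 2 * θ) =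
      Complex.sin (β - (-1) ^ k * θ) := by
    rw [show θ + (-1) ^ k * β - 2 * θ = -θ + (-1) ^ k * β by ring,
      neg_one_pow_mul_sin_add_neg_one_pow_mul]
    ring_nf
  have hangle := sin_add_mul_sin (2 * k * θ) (θ + (-1) ^ k * β) (2 * θ)
  rw [← hnext, ← hprev,
    show (2 * k + 1) * θ + (-1) ^ k * β = 2 * k * θ + (θ + (-1) ^ k * β) by ring,
    show 2 * (k + 1) * θ = 2 * k * θ + 2 * θ by ring]
  linear_combination (-1) ^ k * hangle

theorem sum_neg_one_pow_mul_sin_mul_sin_two_mul (θ β : ℂ) (k : ℕ) :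
    (∑ j ∈ Icc 1 k, (-1) ^ (j - 1) * Complex.sin ((2 * j - 1) * θ + (-1) ^ (j - 1) * β)) *
        Complex.sin (2 * θ) =
      Complex.sin (2 * k * θ) * Complex.sin (β - (-1) ^ k * θ) := by
  induction k with
  | zero => simp
  | succ k ih =>
    have hodd : 2 * ((k + 1 : ℕ) : ℂ) - 1 = 2 * k + 1 := by push_cast; ring
    rw [sum_Icc_succ_top (by lia), add_mul, ih, Nat.add_sub_cancel, hodd,
      neg_one_pow_mul_sin_mul_sin_two_mul, add_sub_cancel, Nat.cast_succ]

theorem vertex_abscissa_closed_form_general (θ β : ℂ) (hθ : Complex.sin (2 * θ) ≠ 0) (k : ℕ) :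
    ∑ j ∈ Icc 1 k, (-1) ^ (j - 1) * Complex.sin ((2 * j - 1) * θ + (-1) ^ (j - 1) * β) =
      Complex.sin (2 * k * θ) * Complex.sin (β - (-1) ^ k * θ) / Complex.sin (2 * θ) :=
  eq_div_of_mul_eq hθ (sum_neg_one_pow_mul_sin_mul_sin_two_mul θ β k)

theorem sin_two_mul_pi_div_pos {x : ℝ} (hx : 2 < x) : 0 < sin (2 * (π / x)) := by
  have hx₀ : 0 < x := two_pos.trans hx
  refine sin_pos_of_pos_of_lt_pi (by positivity) ?_
  rw [← mul_div_assoc, div_lt_iff₀ hx₀, mul_comm]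
  gcongr

/-- Closed form for the abscissa of the `k`-th vertex in the construction of `B_n`:
`∑_{j=1}^{k} (−1)^{j−1} sin((2j−1)π/n + (−1)^{j−1}β)
  = sin(2kπ/n) sin(β − (−1)^k π/n) / sin(2π/n)`. -/
theorem vertex_abscissa_closed_form (n : ℕ) (hn : 3 ≤ n) (β : ℝ) (k : ℕ) (hk : 1 ≤ k) :
    ∑ j ∈ Finset.Icc 1 k,
        (-1 : ℝ) ^ (j - 1) * sin ((2 * (j : ℝ) - 1) * π / n + (-1 : ℝ) ^ (j - 1) * β) =
      sin (2 * (k : ℝ) * π / n) * sin (β - (-1 : ℝ) ^ k * (π / n)) / sin (2 * π / n) := by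
  have hsin : sin (2 * (π / n)) ≠ 0 := (sin_two_mul_pi_div_pos (by exact_mod_cast hn)).ne'
  simp only [mul_div_assoc _ π]
  exact_mod_cast vertex_abscissa_closed_form_general (π / n : ℝ) β (by exact_mod_cast hsin) k
end

section
/- Let n = 2^s for an integer s ≥ 3 and set β = π/n − arcsin((1/2)·sin(2π/n)). Then ∑_{j=1}^{n/4} (−1)^{j−1}·sin((2j−1)·π/n + (−1)^{j−1}·β) = −1/2 and ∑_{j=1}^{n/4} (−1)^{j−1}·cos((2j−1)·π/n + (−1)^{j−1}·β) = 1/2. (In other words, the vertex v_{n/4} of the polygon B_n has coordinates (−1/2, 1/2).) -/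
open Real Finset

/-!
Write `t = π / n` and `δ = β - t`, so that `sin δ = -sin (2t) / 2`. Since `(4i + 1) t + β` and
`(4i + 3) t - β` lie symmetrically, at distance `δ`, about the odd multiple `(2i + 1) (2t)`, pairing
consecutive terms pulls out a factor `2 sin δ = -sin (2t)` and leaves the sum of the cosines, resp.
sines, of these odd multiples. Multiplying such a sum by `2 sin (2t)` makes it telescope, and the
last angle reached is `(n / 2) t = π / 2`.
-/

lemma sum_Icc_one_two_mul {M : Type*} [AddCommMonoid M] (f : ℕ → M) (k : ℕ) :
    ∑ j ∈ Icc 1 (2 * k), f j = ∑ i ∈ range k, (f (2 * i + 1) + f (2 * i + 2)) := by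
  induction k with
  | zero => simp
  | succ k ih =>
    rw [mul_add_one, sum_Icc_succ_top (by lia), sum_Icc_succ_top (by lia), ih, sum_range_succ,
      add_assoc]

lemma sum_alternating_eq_sum_sub (f : ℝ → ℝ) (t β : ℝ) (k : ℕ) :
    ∑ j ∈ Icc 1 (2 * k),
        (-1 : ℝ) ^ (j - 1) * f ((2 * (j : ℝ) - 1) * t + (-1 : ℝ) ^ (j - 1) * β) =
      ∑ i ∈ range k, (f ((2 * i + 1) * (2 * t) + (β - t)) -
        f ((2 * i + 1) * (2 * t) - (β - t))) := by
  rw [sum_Icc_one_two_mul]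
  refine sum_congr rfl fun i _ ↦ ?_
  have even_sign : (-1 : ℝ) ^ (2 * i + 1 - 1) = 1 := (even_two_mul i).neg_one_pow
  have odd_sign : (-1 : ℝ) ^ (2 * i + 2 - 1) = -1 := (odd_two_mul_add_one i).neg_one_pow
  rw [even_sign, odd_sign, one_mul, neg_one_mul, ← sub_eq_add_neg]
  congr 2 <;> push_cast <;> ring

lemma sum_alternating_sin (t β : ℝ) (k : ℕ) :
    ∑ j ∈ Icc 1 (2 * k),
        (-1 : ℝ) ^ (j - 1) * sin ((2 * (j : ℝ) - 1) * t + (-1 : ℝ) ^ (j - 1) * β) =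
      2 * sin (β - t) * ∑ i ∈ range k, cos ((2 * i + 1) * (2 * t)) := by
  rw [sum_alternating_eq_sum_sub, mul_sum]
  refine sum_congr rfl fun i _ ↦ ?_
  rw [sin_add, sin_sub _ (β - t)]
  ring

lemma sum_alternating_cos (t β : ℝ) (k : ℕ) :
    ∑ j ∈ Icc 1 (2 * k),
        (-1 : ℝ) ^ (j - 1) * cos ((2 * (j : ℝ) - 1) * t + (-1 : ℝ) ^ (j - 1) * β) =
      -(2 * sin (β - t)) * ∑ i ∈ range k, sin ((2 * i + 1) * (2 * t)) := by
  rw [sum_alternating_eq_sum_sub, mul_sum]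
  refine sum_congr rfl fun i _ ↦ ?_
  rw [cos_add, cos_sub _ (β - t)]
  ring

lemma two_mul_sin_mul_sum_cos_odd_mul (x : ℝ) (k : ℕ) :
    2 * sin x * ∑ i ∈ range k, cos ((2 * i + 1) * x) = sin (2 * k * x) := by
  calc 2 * sin x * ∑ i ∈ range k, cos ((2 * i + 1) * x)
      = ∑ i ∈ range k, (sin (2 * (i + 1 : ℕ) * x) - sin (2 * i * x)) := by
        rw [mul_sum]
        refine sum_congr rfl fun i _ ↦ ?_
        rw [sin_sub_sin]
        push_cast
        ring_nf
    _ = sin (2 * k * x) := by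
        rw [sum_range_sub fun i : ℕ ↦ sin (2 * i * x)]
        simp

lemma two_mul_sin_mul_sum_sin_odd_mul (x : ℝ) (k : ℕ) :
    2 * sin x * ∑ i ∈ range k, sin ((2 * i + 1) * x) = 1 - cos (2 * k * x) := by
  calc 2 * sin x * ∑ i ∈ range k, sin ((2 * i + 1) * x)
      = ∑ i ∈ range k, (cos (2 * i * x) - cos (2 * (i + 1 : ℕ) * x)) := by
        rw [mul_sum]
        refine sum_congr rfl fun i _ ↦ ?_
        rw [← neg_sub, cos_sub_cos]
        push_cast
        ring_nf
    _ = 1 - cos (2 * k * x) := by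
        rw [sum_range_sub' fun i : ℕ ↦ cos (2 * i * x)]
        simp

lemma sin_arcsin_half_mul_sin (x : ℝ) : sin (arcsin (1 / 2 * sin x)) = 1 / 2 * sin x :=
  sin_arcsin (by linarith [neg_one_le_sin x]) (by linarith [sin_le_one x])

theorem vertex_quarter_coords_general (n : ℕ) (hn : n ≠ 0) (h8 : 8 ∣ n)
    (β : ℝ) (hβ : β = π / n - arcsin ((1 / 2) * sin (2 * π / n))) :
    (∑ j ∈ Finset.Icc 1 (n / 4),
        (-1 : ℝ) ^ (j - 1) * sin ((2 * (j : ℝ) - 1) * π / n + (-1 : ℝ) ^ (j - 1) * β) =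
      -(1 / 2)) ∧
    (∑ j ∈ Finset.Icc 1 (n / 4),
        (-1 : ℝ) ^ (j - 1) * cos ((2 * (j : ℝ) - 1) * π / n + (-1 : ℝ) ^ (j - 1) * β) =
      1 / 2) := by
  obtain ⟨k, rfl⟩ := h8
  have quarter : 8 * k / 4 = 2 * k := by lia
  simp only [quarter, mul_div_assoc] at hβ ⊢
  set t : ℝ := π / (8 * k : ℕ) with ht
  have two_sin_sub : 2 * sin (β - t) = -sin (2 * t) := by
    rw [hβ, sub_sub_cancel_left, sin_neg, sin_arcsin_half_mul_sin]
    ring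
  have last_angle : 2 * k * (2 * t) = π / 2 := by
    have hk : (k : ℝ) ≠ 0 := by exact_mod_cast right_ne_zero_of_mul hn
    rw [ht]
    push_cast
    field_simp
    norm_num
  have cos_sum := two_mul_sin_mul_sum_cos_odd_mul (2 * t) k
  have sin_sum := two_mul_sin_mul_sum_sin_odd_mul (2 * t) k
  rw [last_angle, sin_pi_div_two] at cos_sum
  rw [last_angle, cos_pi_div_two] at sin_sum
  rw [sum_alternating_sin, sum_alternating_cos, two_sin_sub]
  constructor <;> linarith

/-- The vertex `v_{n/4}` of the polygon `B_n` has coordinates `(−1/2, 1/2)`. -/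
theorem vertex_quarter_coords (s : ℕ) (hs : 3 ≤ s) (n : ℕ) (hn : n = 2 ^ s)
    (β : ℝ) (hβ : β = π / n - arcsin ((1 / 2) * sin (2 * π / n))) :
    (∑ j ∈ Finset.Icc 1 (n / 4),
        (-1 : ℝ) ^ (j - 1) * sin ((2 * (j : ℝ) - 1) * π / n + (-1 : ℝ) ^ (j - 1) * β) =
      -(1 / 2)) ∧
    (∑ j ∈ Finset.Icc 1 (n / 4),
        (-1 : ℝ) ^ (j - 1) * cos ((2 * (j : ℝ) - 1) * π / n + (-1 : ℝ) ^ (j - 1) * β) =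
      1 / 2) := by
  subst hn
  exact vertex_quarter_coords_general _ (by positivity) (pow_dvd_pow 2 hs) β hβ
end

section
/- Define, for a positive integer n, L_Q(n) = 2n·sin(π/(2n))·cos(π/8 − (1/2)·arcsin(cos(π/n)/√2)). Then, as n → ∞ over the positive integers, 2n·sin(π/(2n)) − L_Q(n) = π⁵/(32n⁴) + O(1/n⁶); that is, the function n ↦ 2n·sin(π/(2n)) − 2n·sin(π/(2n))·cos(π/8 − (1/2)·arcsin(cos(π/n)/√2)) − π⁵/(32n⁴) is O(n⁻⁶) along the filter atTop. -/
open Real Filter Asymptotics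

/-!
Put `x = π / n`. Since `cos (2 arcsin (cos x / √2)) = 1 - cos² x = sin² x`, the nested angle
`π / 8 - arcsin (cos x / √2) / 2` is just `arcsin (sin² x) / 4`, which is `x² / 4 + O(x⁴)` as
`x → 0`. Hence one minus its cosine is `x⁴ / 32 + O(x⁶)`, and multiplying by
`2n sin (x / 2) = π + O(x²)` gives the leading term `π x⁴ / 32 = π⁵ / (32 n⁴)`.
-/

open scoped Topology

theorem two_mul_arcsin_eq_arccos {y : ℝ} (hy₀ : 0 ≤ y) (hy₁ : y ≤ 1) :
    2 * arcsin y = arccos (1 - 2 * y ^ 2) := by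
  have hcos : cos (2 * arcsin y) = 1 - 2 * y ^ 2 := by
    rw [cos_two_mul_eq_one_sub, sin_arcsin (by linarith) hy₁]
  have hnonneg : 0 ≤ arcsin y := arcsin_nonneg.mpr hy₀
  have hle : arcsin y ≤ π / 2 := arcsin_le_pi_div_two y
  rw [← hcos, arccos_cos (by linarith) (by linarith)]

theorem pi_div_eight_sub_half_arcsin_cos_div_sqrt_two {x : ℝ} (hx : 0 ≤ cos x) :
    π / 8 - (1 / 2) * arcsin (cos x / √2) = arcsin (sin x ^ 2) / 4 := by
  have hle : cos x / √2 ≤ 1 := by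
    rw [div_le_one (by positivity)]
    exact (cos_le_one x).trans (one_le_sqrt.mpr one_le_two)
  have hsq : 1 - 2 * (cos x / √2) ^ 2 = sin x ^ 2 := by
    rw [div_pow, sq_sqrt zero_le_two, sin_sq]
    ring
  have hdouble := two_mul_arcsin_eq_arccos (by positivity) hle
  rw [hsq, arccos] at hdouble
  linarith

theorem isBigO_sin_self : sin =O[𝓝 0] (fun x : ℝ => x) := by
  simpa using (hasDerivAt_sin 0).isBigO_sub

theorem isBigO_sin_sub_self : (fun x : ℝ => sin x - x) =O[𝓝 0] (· ^ 3) := by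
  refine IsBigO.of_bound 1 ?_
  filter_upwards [Metric.closedBall_mem_nhds (0 : ℝ) one_pos] with x hx
  rw [mem_closedBall_zero_iff, norm_eq_abs] at hx
  have hpow : |x| ^ 5 ≤ |x| ^ 3 := pow_le_pow_of_le_one (abs_nonneg x) hx (by norm_num)
  calc ‖sin x - x‖ = |(sin x - (x - x ^ 3 / 6)) + -(x ^ 3 / 6)| := by
        rw [norm_eq_abs]; ring_nf
    _ ≤ |sin x - (x - x ^ 3 / 6)| + |x| ^ 3 / 6 := by
        grw [abs_add_le]; simp [abs_div]
    _ ≤ |x| ^ 5 / 100 + |x| ^ 3 / 6 := by grw [sin_bound hx]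
    _ ≤ 1 * ‖x ^ 3‖ := by
        rw [norm_pow, norm_eq_abs]
        linarith [pow_nonneg (abs_nonneg x) 3]

theorem isBigO_one_sub_cos_sub_sq_div_two :
    (fun x : ℝ => 1 - cos x - x ^ 2 / 2) =O[𝓝 0] (· ^ 4) := by
  refine IsBigO.of_bound (5 / 96) ?_
  filter_upwards [Metric.closedBall_mem_nhds (0 : ℝ) one_pos] with x hx
  rw [mem_closedBall_zero_iff, norm_eq_abs] at hx
  calc ‖1 - cos x - x ^ 2 / 2‖ = |cos x - (1 - x ^ 2 / 2)| := by
        rw [norm_eq_abs, abs_sub_comm]; ring_nf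
    _ ≤ |x| ^ 4 * (5 / 96) := cos_bound hx
    _ = 5 / 96 * ‖x ^ 4‖ := by rw [norm_pow, norm_eq_abs, mul_comm]

theorem isBigO_arcsin_self : arcsin =O[𝓝 0] (fun x : ℝ => x) := by
  simpa using (hasDerivAt_arcsin (x := 0) (by norm_num) (by norm_num)).isBigO_sub

theorem isBigO_arcsin_sub_self : (fun x : ℝ => arcsin x - x) =O[𝓝 0] (· ^ 3) := by
  have harcsin : Tendsto arcsin (𝓝 0) (𝓝 0) := by
    simpa using continuous_arcsin.tendsto 0
  have hsin : (fun x => sin (arcsin x) - arcsin x) =O[𝓝 0] (fun x => arcsin x ^ 3) :=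
    isBigO_sin_sub_self.comp_tendsto harcsin
  refine IsBigO.trans ?_ (hsin.trans (isBigO_arcsin_self.pow 3))
  refine EventuallyEq.trans_isBigO ?_ (isBigO_refl _ _).neg_left
  filter_upwards [Icc_mem_nhds (a := -1) (b := 1) (x := (0 : ℝ)) (by norm_num) (by norm_num)]
    with x hx
  rw [sin_arcsin hx.1 hx.2, neg_sub]

theorem isBigO_sin_sq_sub_sq : (fun x : ℝ => sin x ^ 2 - x ^ 2) =O[𝓝 0] (· ^ 4) :=
  (isBigO_sin_sub_self.mul (isBigO_sin_self.add (isBigO_refl _ _))).congr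
    (fun x => by ring) (fun x => by ring)

theorem isBigO_arcsin_sin_sq_sub_sq :
    (fun x : ℝ => arcsin (sin x ^ 2) - x ^ 2) =O[𝓝 0] (· ^ 4) := by
  have hsin_sq : Tendsto (fun x : ℝ => sin x ^ 2) (𝓝 0) (𝓝 0) := by
    have hcont : Continuous fun x : ℝ => sin x ^ 2 := by fun_prop
    simpa using hcont.tendsto 0
  have harcsin : (fun x => arcsin (sin x ^ 2) - sin x ^ 2) =O[𝓝 0] (fun x : ℝ => x ^ 4) := by
    calc (fun x => arcsin (sin x ^ 2) - sin x ^ 2)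
        =O[𝓝 0] fun x => (sin x ^ 2) ^ 3 := isBigO_arcsin_sub_self.comp_tendsto hsin_sq
      _ =O[𝓝 0] fun x => (x ^ 2) ^ 3 := (isBigO_sin_self.pow 2).pow 3
      _ = fun x => x ^ 6 := by ext x; ring
      _ =O[𝓝 0] fun x => x ^ 4 := (isLittleO_pow_pow (by norm_num)).isBigO
  exact (harcsin.add isBigO_sin_sq_sub_sq).congr_left fun x => by ring

theorem isBigO_one_sub_cos_quarter_arcsin_sin_sq :
    (fun x : ℝ => 1 - cos (arcsin (sin x ^ 2) / 4) - x ^ 4 / 32) =O[𝓝 0] (· ^ 6) := by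
  set φ : ℝ → ℝ := fun x => arcsin (sin x ^ 2)
  have hφ_sub : (fun x => φ x - x ^ 2) =O[𝓝 0] (· ^ 4) := isBigO_arcsin_sin_sq_sub_sq
  have hφ : φ =O[𝓝 0] (· ^ 2) :=
    ((hφ_sub.trans (isLittleO_pow_pow (by norm_num)).isBigO).add (isBigO_refl _ _)).congr_left
      fun x => sub_add_cancel (φ x) (x ^ 2)
  have hφ_quarter : Tendsto (fun x => φ x / 4) (𝓝 0) (𝓝 0) := by
    have hcont : Continuous fun x => φ x / 4 := by fun_prop
    simpa [φ] using hcont.tendsto 0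
  have hcos : (fun x => 1 - cos (φ x / 4) - (φ x / 4) ^ 2 / 2) =O[𝓝 0] (fun x : ℝ => x ^ 6) := by
    calc (fun x => 1 - cos (φ x / 4) - (φ x / 4) ^ 2 / 2)
        =O[𝓝 0] fun x => (φ x / 4) ^ 4 :=
          isBigO_one_sub_cos_sub_sq_div_two.comp_tendsto hφ_quarter
      _ = fun x => (1 / 4) ^ 4 * φ x ^ 4 := by ext x; ring
      _ =O[𝓝 0] fun x => (x ^ 2) ^ 4 := (hφ.pow 4).const_mul_left _
      _ = fun x => x ^ 8 := by ext x; ring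
      _ =O[𝓝 0] fun x => x ^ 6 := (isLittleO_pow_pow (by norm_num)).isBigO
  have hsq : (fun x => (φ x - x ^ 2) * (φ x + x ^ 2)) =O[𝓝 0] (fun x : ℝ => x ^ 6) :=
    (hφ_sub.mul (hφ.add (isBigO_refl _ _))).congr_right fun x => by ring
  exact (hcos.add (hsq.const_mul_left (1 / 32))).congr_left fun x => by ring

theorem isBigO_sin_half_mul_one_sub_cos_sub :
    (fun x : ℝ => sin (x / 2) * (1 - cos (π / 8 - (1 / 2) * arcsin (cos x / √2))) - x ^ 5 / 64)
      =O[𝓝 0] (· ^ 7) := by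
  have hhalf : Tendsto (fun x : ℝ => x / 2) (𝓝 0) (𝓝 0) := by
    simpa using (continuous_id.div_const (2 : ℝ)).tendsto 0
  have hsin : (fun x => sin (x / 2)) =O[𝓝 0] (fun x : ℝ => x) := by
    calc (fun x => sin (x / 2))
        =O[𝓝 0] fun x => x / 2 := isBigO_sin_self.comp_tendsto hhalf
      _ = fun x => 1 / 2 * x := by ext x; ring
      _ =O[𝓝 0] fun x => x := (isBigO_refl _ _).const_mul_left _
  have hsin_sub : (fun x => sin (x / 2) - x / 2) =O[𝓝 0] (fun x : ℝ => x ^ 3) := by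
    calc (fun x => sin (x / 2) - x / 2)
        =O[𝓝 0] fun x => (x / 2) ^ 3 := isBigO_sin_sub_self.comp_tendsto hhalf
      _ = fun x => (1 / 2) ^ 3 * x ^ 3 := by ext x; ring
      _ =O[𝓝 0] fun x => x ^ 3 := (isBigO_refl _ _).const_mul_left _
  have hcos : ∀ᶠ x in 𝓝 (0 : ℝ), 0 ≤ cos x :=
    (continuous_cos.tendsto 0).eventually (Ici_mem_nhds (by simp))
  have hmain : (fun x => sin (x / 2) * (1 - cos (arcsin (sin x ^ 2) / 4) - x ^ 4 / 32))
      =O[𝓝 0] (fun x : ℝ => x ^ 7) :=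
    (hsin.mul isBigO_one_sub_cos_quarter_arcsin_sin_sq).congr_right fun x => by ring
  have hcorrection : (fun x => 1 / 32 * ((sin (x / 2) - x / 2) * x ^ 4))
      =O[𝓝 0] (fun x : ℝ => x ^ 7) :=
    ((hsin_sub.mul (isBigO_refl _ _)).const_mul_left _).congr_right fun x => by ring
  refine EventuallyEq.trans_isBigO ?_ (hmain.add hcorrection)
  filter_upwards [hcos] with x hx
  rw [pi_div_eight_sub_half_arcsin_cos_div_sqrt_two hx]
  ring

theorem perimeter_gap_Qn_asymptotics_general :
    (fun t : ℝ =>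
        2 * t * sin (π / (2 * t)) -
          2 * t * sin (π / (2 * t)) * cos (π / 8 - (1 / 2) * arcsin (cos (π / t) / √2)) -
          π ^ 5 / (32 * t ^ 4)) =O[atTop]
      (fun t : ℝ => 1 / t ^ 6) := by
  have hπt : Tendsto (fun t : ℝ => π / t) atTop (𝓝 0) := tendsto_id.const_div_atTop π
  have hexpansion := (isBigO_refl (fun t : ℝ => 2 * t) atTop).mul
    (isBigO_sin_half_mul_one_sub_cos_sub.comp_tendsto hπt)
  have hpow : (fun t : ℝ => 2 * t * (π / t) ^ 7) =O[atTop] (fun t : ℝ => 1 / t ^ 6) := by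
    refine EventuallyEq.trans_isBigO ?_ ((isBigO_refl _ _).const_mul_left (2 * π ^ 7))
    filter_upwards [eventually_ne_atTop 0] with t ht
    field_simp
  refine EventuallyEq.trans_isBigO ?_ (hexpansion.trans hpow)
  filter_upwards [eventually_ne_atTop 0] with t ht
  have hhalf : π / t / 2 = π / (2 * t) := by rw [div_div, mul_comm]
  simp only [Function.comp_apply, hhalf]
  field_simp
  ring

/-- Asymptotics of the perimeter gap for the polygon `Q_n`:
`2n sin(π/2n) − L(Q_n) = π⁵/(32 n⁴) + O(1/n⁶)` as `n → ∞`. -/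
theorem perimeter_gap_Qn_asymptotics :
    (fun n : ℕ =>
        2 * n * sin (π / (2 * n)) -
          2 * n * sin (π / (2 * n)) *
            cos (π / 8 - (1 / 2) * arcsin (cos (π / n) / Real.sqrt 2)) -
          π ^ 5 / (32 * (n : ℝ) ^ 4)) =O[atTop]
      (fun n : ℕ => 1 / (n : ℝ) ^ 6) :=
  perimeter_gap_Qn_asymptotics_general.comp_tendsto tendsto_natCast_atTop_atTop
end

section
/- Define, for a positive integer n, f₁(n) = ((4n−4)/3)·sin(π/(2n−2)) + ((2n+4)/3)·sin(π/(2n+4)) and f₂(n) = ((4n+4)/3)·sin(π/(2n+2)) + ((2n−4)/3)·sin(π/(2n−4)). Then, as n → ∞ over the positive integers, both 2n·sin(π/(2n)) − f₁(n) = π³/(4n⁴) + O(1/n⁵) and 2n·sin(π/(2n)) − f₂(n) = π³/(4n⁴) + O(1/n⁵); that is, for i = 1, 2 the function n ↦ 2n·sin(π/(2n)) − f_i(n) − π³/(4n⁴) is O(n⁻⁵) along the filter atTop. -/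
open Real Filter Asymptotics

open Finset (range)
open scoped Nat Topology

/-!
Write `F x = 2 x sin (π / (2 x))`. Both perimeters are averages `2/3 F (n - c) + 1/3 F (n + 2c)`
with `c = ±1`, whose shifts have mean `0` and second moment `2`. Hence the gap to `F n` is
`-F'' n` up to a third-order Taylor remainder, and
`F'' x = -π² sin (π / (2 x)) / (2 x³) = -π³ / (4 x⁴) + O(x⁻⁵)`, while `F''' x = O(x⁻⁵)`.
-/

section TaylorShift

variable {f : ℝ → ℝ}

lemma exists_add_sub_taylor_sum_eq {n : ℕ} {x b : ℝ}
    (hf : ∀ y ∈ Set.uIcc x (x + b), ContDiffAt ℝ (n + 1) f y) :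
    ∃ ξ ∈ Set.uIcc x (x + b),
      f (x + b) - ∑ k ∈ range (n + 1), iteratedDeriv k f x * b ^ k / k ! =
        iteratedDeriv (n + 1) f ξ * b ^ (n + 1) / (n + 1)! := by
  rcases eq_or_ne b 0 with rfl | hb
  · exact ⟨x, Set.left_mem_uIcc, by simp [Finset.sum_range_succ']⟩
  have hne : x ≠ x + b := by simpa using hb
  obtain ⟨ξ, hξ, hlagrange⟩ := taylor_mean_remainder_lagrange_iteratedDeriv hne
    fun y hy ↦ (hf y hy).contDiffWithinAt
  refine ⟨ξ, Set.Ioo_subset_Icc_self hξ, ?_⟩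
  rw [add_sub_cancel_left] at hlagrange
  rw [← hlagrange, taylor_within_apply]
  congr 1
  refine Finset.sum_congr rfl fun k hk ↦ ?_
  have hkn : (k : WithTop ℕ∞) ≤ n + 1 := by
    exact_mod_cast (Finset.mem_range.mp hk).le
  rw [iteratedDerivWithin_eq_iteratedDeriv (uniqueDiffOn_uIcc hne)
    ((hf x Set.left_mem_uIcc).of_le hkn) Set.left_mem_uIcc, add_sub_cancel_left, smul_eq_mul]
  ring

lemma isEquivalent_id_of_mem_uIcc_add {ξ : ℝ → ℝ} {b : ℝ}
    (hξ : ∀ᶠ x in atTop, ξ x ∈ Set.uIcc x (x + b)) : ξ ~[atTop] id := by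
  refine IsLittleO.isEquivalent (IsBigO.trans_isLittleO ?_ (isLittleO_const_id_atTop b))
  refine IsBigO.of_bound' ?_
  filter_upwards [hξ] with x hx
  simpa using Set.abs_sub_left_of_mem_uIcc hx

theorem isBigO_add_sub_taylor_sum {n k : ℕ} (b : ℝ)
    (hf : ∀ᶠ x in atTop, ContDiffAt ℝ (n + 1) f x)
    (hrem : iteratedDeriv (n + 1) f =O[atTop] fun x ↦ 1 / x ^ k) :
    (fun x ↦ f (x + b) - ∑ j ∈ range (n + 1), iteratedDeriv j f x * b ^ j / j !) =O[atTop]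
      fun x ↦ 1 / x ^ k := by
  have hξ_exists : ∀ᶠ x in atTop, ∃ ξ ∈ Set.uIcc x (x + b),
      f (x + b) - ∑ j ∈ range (n + 1), iteratedDeriv j f x * b ^ j / j ! =
        iteratedDeriv (n + 1) f ξ * b ^ (n + 1) / (n + 1)! := by
    have hshift : Tendsto (fun x : ℝ ↦ x + b) atTop atTop :=
      tendsto_atTop_add_const_right _ b tendsto_id
    have hright := eventually_forall_ge_atTop.mpr hf
    filter_upwards [hright, hshift.eventually hright] with x hx hxb
    exact exists_add_sub_taylor_sum_eq fun y hy ↦ (inf_le_iff.mp hy.1).elim (hx y) (hxb y)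
  obtain ⟨ξ, hξ⟩ := hξ_exists.choice
  have hξ_equiv : ξ ~[atTop] id := isEquivalent_id_of_mem_uIcc_add (hξ.mono fun _ h ↦ h.1)
  have hξ_rem : (fun x ↦ iteratedDeriv (n + 1) f (ξ x)) =O[atTop] fun x ↦ 1 / x ^ k := by
    refine (hrem.comp_tendsto (hξ_equiv.symm.tendsto_atTop tendsto_id)).trans ?_
    simpa [Function.comp_def] using! (hξ_equiv.pow k).inv.isBigO
  refine (hξ_rem.const_mul_left (b ^ (n + 1) / (n + 1)!)).congr' ?_ .rfl
  filter_upwards [hξ] with x hx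
  rw [hx.2]
  ring

theorem isBigO_sub_sum_shift_add_iteratedDeriv_two {ι : Type*} {s : Finset ι} {w b : ι → ℝ} {k : ℕ}
    (hw : ∑ i ∈ s, w i = 1) (hb : ∑ i ∈ s, w i * b i = 0)
    (hf : ∀ᶠ x in atTop, ContDiffAt ℝ 3 f x)
    (hrem : iteratedDeriv 3 f =O[atTop] fun x ↦ 1 / x ^ k) :
    (fun x ↦ f x - ∑ i ∈ s, w i * f (x + b i) +
        (∑ i ∈ s, w i * b i ^ 2) / 2 * iteratedDeriv 2 f x) =O[atTop] fun x ↦ 1 / x ^ k := by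
  have hsum := IsBigO.fun_sum fun i (_ : i ∈ s) ↦
    (isBigO_add_sub_taylor_sum (n := 2) (b i) (by norm_num [hf]) hrem).const_mul_left (w i)
  refine hsum.neg_left.congr_left fun x ↦ ?_
  have hexpand (i : ι) :
      w i * (f (x + b i) - ∑ j ∈ range 3, iteratedDeriv j f x * b i ^ j / j !) =
        w i * f (x + b i) - w i * f x - w i * b i * deriv f x -
          w i * b i ^ 2 * (iteratedDeriv 2 f x / 2) := by
    simp only [Finset.sum_range_succ, Finset.range_one, Finset.sum_singleton, iteratedDeriv_zero,
      iteratedDeriv_one, pow_zero, pow_one, Nat.factorial_zero, Nat.factorial_one,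
      Nat.factorial_two, Nat.cast_one, Nat.cast_ofNat, mul_one, div_one]
    ring
  simp only [hexpand, Finset.sum_sub_distrib, ← Finset.sum_mul, hw, hb]
  ring

end TaylorShift

/-- The Reinhardt–Datta bound `2 x sin (π / (2 x))` on the perimeter of a convex small `x`-gon,
extended to real `x`. -/
noncomputable def reinhardtBound (x : ℝ) : ℝ :=
  2 * x * sin (π / (2 * x))

section ReinhardtBound

variable {x : ℝ}

lemma hasDerivAt_pi_div_two_mul (hx : x ≠ 0) :
    HasDerivAt (fun x ↦ π / (2 * x)) (-π / (2 * x ^ 2)) x := by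
  refine (((hasDerivAt_id x).const_mul 2).fun_inv (by simpa)).const_mul π |>.congr_deriv ?_
  simp only [id]
  field_simp

lemma contDiffAt_reinhardtBound {n : WithTop ℕ∞} (hx : x ≠ 0) :
    ContDiffAt ℝ n reinhardtBound x := by
  unfold reinhardtBound
  have : 2 * x ≠ 0 := by simpa
  fun_prop (disch := assumption)

lemma deriv_reinhardtBound (hx : x ≠ 0) :
    deriv reinhardtBound x = 2 * sin (π / (2 * x)) - π / x * cos (π / (2 * x)) := by
  refine HasDerivAt.deriv ?_
  refine (((hasDerivAt_id x).const_mul 2).mul (hasDerivAt_pi_div_two_mul hx).sin).congr_deriv ?_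
  simp only [id]
  field_simp
  ring

lemma iteratedDeriv_two_reinhardtBound (hx : x ≠ 0) :
    iteratedDeriv 2 reinhardtBound x = -π ^ 2 / (2 * x ^ 3) * sin (π / (2 * x)) := by
  have hderiv : deriv reinhardtBound =ᶠ[𝓝 x]
      fun y ↦ 2 * sin (π / (2 * y)) - π * y⁻¹ * cos (π / (2 * y)) := by
    filter_upwards [eventually_ne_nhds hx] with y hy
    rw [deriv_reinhardtBound hy, div_eq_mul_inv π y]
  have hangle := hasDerivAt_pi_div_two_mul hx
  rw [iteratedDeriv_succ, iteratedDeriv_one, hderiv.deriv_eq]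
  refine HasDerivAt.deriv ?_
  refine ((hangle.sin.const_mul 2).sub
    (((hasDerivAt_inv hx).const_mul π).mul hangle.cos)).congr_deriv ?_
  field_simp
  ring

lemma iteratedDeriv_three_reinhardtBound (hx : x ≠ 0) :
    iteratedDeriv 3 reinhardtBound x =
      3 * π ^ 2 / (2 * x ^ 4) * sin (π / (2 * x)) + π ^ 3 / (4 * x ^ 5) * cos (π / (2 * x)) := by
  have hderiv : iteratedDeriv 2 reinhardtBound =ᶠ[𝓝 x]
      fun y ↦ -π ^ 2 / 2 * (y ^ 3)⁻¹ * sin (π / (2 * y)) := by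
    filter_upwards [eventually_ne_nhds hx] with y hy
    rw [iteratedDeriv_two_reinhardtBound hy]
    field_simp
  rw [iteratedDeriv_succ, hderiv.deriv_eq]
  refine HasDerivAt.deriv ?_
  refine ((((hasDerivAt_pow 3 x).fun_inv (by positivity)).const_mul _).mul
    (hasDerivAt_pi_div_two_mul hx).sin).congr_deriv ?_
  field_simp
  ring

lemma abs_iteratedDeriv_two_reinhardtBound_add_le (hx : 0 < x) :
    |iteratedDeriv 2 reinhardtBound x + π ^ 3 / (4 * x ^ 4)| ≤ π ^ 5 / 96 / x ^ 6 := by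
  have hangle : 0 < π / (2 * x) := by positivity
  calc |iteratedDeriv 2 reinhardtBound x + π ^ 3 / (4 * x ^ 4)|
      = |π ^ 2 / (2 * x ^ 3) * (π / (2 * x) - sin (π / (2 * x)))| := by
        rw [iteratedDeriv_two_reinhardtBound hx.ne']
        congr 1
        field_simp
        ring
    _ = π ^ 2 / (2 * x ^ 3) * |π / (2 * x) - sin (π / (2 * x))| := by
        rw [abs_mul, abs_of_pos (by positivity)]
    _ ≤ π ^ 2 / (2 * x ^ 3) * ((π / (2 * x)) ^ 3 / 6) := by
        gcongr
        simpa only [abs_of_pos hangle] using abs_sub_sin_le (π / (2 * x))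
    _ = π ^ 5 / 96 / x ^ 6 := by
        field_simp
        norm_num

lemma abs_iteratedDeriv_three_reinhardtBound_le (hx : 0 < x) :
    |iteratedDeriv 3 reinhardtBound x| ≤ π ^ 3 / x ^ 5 := by
  have hangle : 0 < π / (2 * x) := by positivity
  have hsin : |sin (π / (2 * x))| ≤ π / (2 * x) := by
    simpa only [abs_of_pos hangle] using abs_sin_le_abs (x := π / (2 * x))
  rw [iteratedDeriv_three_reinhardtBound hx.ne']
  calc |3 * π ^ 2 / (2 * x ^ 4) * sin (π / (2 * x)) + π ^ 3 / (4 * x ^ 5) * cos (π / (2 * x))|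
      ≤ 3 * π ^ 2 / (2 * x ^ 4) * |sin (π / (2 * x))| +
          π ^ 3 / (4 * x ^ 5) * |cos (π / (2 * x))| := by
        refine (abs_add_le _ _).trans_eq ?_
        simp only [abs_mul, abs_div, abs_pow, abs_of_pos hx, abs_of_pos pi_pos, Nat.abs_ofNat]
    _ ≤ 3 * π ^ 2 / (2 * x ^ 4) * (π / (2 * x)) + π ^ 3 / (4 * x ^ 5) * 1 := by
        gcongr
        exact abs_cos_le_one _
    _ = π ^ 3 / x ^ 5 := by
        field_simp
        norm_num

end ReinhardtBound

lemma isBigO_iteratedDeriv_two_reinhardtBound_add :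
    (fun x ↦ iteratedDeriv 2 reinhardtBound x + π ^ 3 / (4 * x ^ 4)) =O[atTop]
      fun x ↦ 1 / x ^ 5 := by
  refine IsBigO.of_bound (π ^ 5 / 96) ?_
  filter_upwards [eventually_ge_atTop 1] with x hx
  have hx_pos : 0 < x := by linarith
  calc ‖iteratedDeriv 2 reinhardtBound x + π ^ 3 / (4 * x ^ 4)‖
      ≤ π ^ 5 / 96 / x ^ 6 := abs_iteratedDeriv_two_reinhardtBound_add_le hx_pos
    _ ≤ π ^ 5 / 96 / x ^ 5 := by
        gcongr
        norm_num
    _ = π ^ 5 / 96 * ‖1 / x ^ 5‖ := by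
        rw [norm_of_nonneg (by positivity), mul_one_div]

lemma isBigO_iteratedDeriv_three_reinhardtBound :
    iteratedDeriv 3 reinhardtBound =O[atTop] fun x ↦ 1 / x ^ 5 := by
  refine IsBigO.of_bound (π ^ 3) ?_
  filter_upwards [eventually_gt_atTop 0] with x hx
  rw [norm_of_nonneg (show 0 ≤ 1 / x ^ 5 by positivity), mul_one_div]
  exact abs_iteratedDeriv_three_reinhardtBound_le hx

theorem isBigO_reinhardtBound_sub_sum_shift {ι : Type*} {s : Finset ι} {w b : ι → ℝ}
    (hw : ∑ i ∈ s, w i = 1) (hb : ∑ i ∈ s, w i * b i = 0) :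
    (fun x ↦ reinhardtBound x - ∑ i ∈ s, w i * reinhardtBound (x + b i) -
        (∑ i ∈ s, w i * b i ^ 2) * π ^ 3 / (8 * x ^ 4)) =O[atTop] fun x ↦ 1 / x ^ 5 := by
  have hsmooth : ∀ᶠ x in atTop, ContDiffAt ℝ 3 reinhardtBound x := by
    filter_upwards [eventually_ne_atTop 0] with x hx using contDiffAt_reinhardtBound hx
  refine ((isBigO_sub_sum_shift_add_iteratedDeriv_two hw hb hsmooth
    isBigO_iteratedDeriv_three_reinhardtBound).sub
      (isBigO_iteratedDeriv_two_reinhardtBound_add.const_mul_left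
        ((∑ i ∈ s, w i * b i ^ 2) / 2))).congr_left fun x ↦ ?_
  ring

theorem perimeter_gap_Tn_asymptotics_general (c : ℝ) :
    (fun x : ℝ ↦
        2 * x * sin (π / (2 * x)) -
          (((4 * x - 4 * c) / 3) * sin (π / (2 * x - 2 * c)) +
            ((2 * x + 4 * c) / 3) * sin (π / (2 * x + 4 * c))) -
          c ^ 2 * π ^ 3 / (4 * x ^ 4)) =O[atTop]
      (fun x ↦ 1 / x ^ 5) := by
  let w : Fin 2 → ℝ := ![2 / 3, 1 / 3]
  let b : Fin 2 → ℝ := ![-c, 2 * c]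
  have hw : ∑ i, w i = 1 := by norm_num [w]
  have hb : ∑ i, w i * b i = 0 := by
    simp only [w, b, Fin.sum_univ_two, Matrix.cons_val_zero, Matrix.cons_val_one]
    ring
  refine (isBigO_reinhardtBound_sub_sum_shift hw hb).congr_left fun x ↦ ?_
  have hleft : 2 * (x + -c) = 2 * x - 2 * c := by ring
  have hright : 2 * (x + 2 * c) = 2 * x + 4 * c := by ring
  simp only [w, b, reinhardtBound, Fin.sum_univ_two, Matrix.cons_val_zero, Matrix.cons_val_one,
    hleft, hright]
  ring

/-- Asymptotics of the perimeter gap for the Tamvakis polygons `T_n` in both cases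
`n ≡ 1 (mod 3)` and `n ≡ 2 (mod 3)`:
`2n sin(π/2n) − L(T_n) = π³/(4n⁴) + O(1/n⁵)` as `n → ∞`. -/
theorem perimeter_gap_Tn_asymptotics :
    ((fun n : ℕ =>
        2 * n * sin (π / (2 * n)) -
          (((4 * (n : ℝ) - 4) / 3) * sin (π / (2 * (n : ℝ) - 2)) +
            ((2 * (n : ℝ) + 4) / 3) * sin (π / (2 * (n : ℝ) + 4))) -
          π ^ 3 / (4 * (n : ℝ) ^ 4)) =O[atTop]
      (fun n : ℕ => 1 / (n : ℝ) ^ 5)) ∧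
    ((fun n : ℕ =>
        2 * n * sin (π / (2 * n)) -
          (((4 * (n : ℝ) + 4) / 3) * sin (π / (2 * (n : ℝ) + 2)) +
            ((2 * (n : ℝ) - 4) / 3) * sin (π / (2 * (n : ℝ) - 4))) -
          π ^ 3 / (4 * (n : ℝ) ^ 4)) =O[atTop]
      (fun n : ℕ => 1 / (n : ℝ) ^ 5)) := by
  have hgap (c : ℝ) :=
    (perimeter_gap_Tn_asymptotics_general c).comp_tendsto tendsto_natCast_atTop_atTop
  exact ⟨by simpa [Function.comp_def] using hgap 1,
    by simpa [Function.comp_def, ← sub_eq_add_neg] using hgap (-1)⟩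
end

section
/- Define, for an integer n ≥ 2, g(n) = (2n−2)·sin(π/(2n−2)) + 4·sin(π/(4n−4)) − 2·sin(π/(2n−2)). Then, as n → ∞ over the integers, 2n·sin(π/(2n)) − g(n) = 5π³/(96n³) + O(1/n⁴); that is, the function n ↦ 2n·sin(π/(2n)) − (2n−2)·sin(π/(2n−2)) − 4·sin(π/(4n−4)) + 2·sin(π/(2n−2)) − 5π³/(96n³) is O(n⁻⁴) along the filter atTop. -/
open Real Filter Asymptotics

/-! The upper bound and the perimeter of `R_{n-1}^+` are both combinations of values `sin (c / x)`,
hence expand in powers of `1 / x` up to `O(x⁻⁴)`. Both constant terms are `π`. The quadratic terms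
`-π³ / (24 n²)` and `-π³ / (24 (n - 1)²)` differ by `π³ / (12 n³) + O(n⁻⁴)`, while replacing one
side of the regular `(n - 1)`-gon by two gains `π³ / (32 n³) + O(n⁻⁴)`, and
`1 / 12 - 1 / 32 = 5 / 96`. -/

open Bornology (cobounded eventually_ne_cobounded)

section InversePowers

variable {𝕜 : Type*} [NormedField 𝕜]

lemma isLittleO_inv_pow_inv_pow_cobounded {m n : ℕ} (h : m < n) :
    (fun x : 𝕜 => x⁻¹ ^ n) =o[cobounded 𝕜] (fun x => x⁻¹ ^ m) :=
  (isLittleO_pow_pow h).comp_tendsto tendsto_inv₀_cobounded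

lemma isBigO_inv_sub_const_inv_cobounded (a : 𝕜) :
    (fun x => (x - a)⁻¹) =O[cobounded 𝕜] (fun x => x⁻¹) :=
  (IsEquivalent.refl.sub_isLittleO (isLittleO_const_id_cobounded a)).inv.isBigO

lemma inv_eq_inv_add_mul_inv_sub {x a : 𝕜} (hx : x ≠ 0) (hxa : x ≠ a) :
    (x - a)⁻¹ = x⁻¹ + a * x⁻¹ * (x - a)⁻¹ := by
  have h_sub : x - a ≠ 0 := sub_ne_zero.mpr hxa
  field_simp
  ring

lemma inv_sub_const_pow_expansion_cobounded (a : 𝕜) (k : ℕ) :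
    (fun x => (x - a)⁻¹ ^ k - (x⁻¹ ^ k + k * a * x⁻¹ ^ (k + 1))) =O[cobounded 𝕜]
      (fun x => x⁻¹ ^ (k + 2)) := by
  induction k with
  | zero => simpa using isBigO_zero _ _
  | succ k ih =>
    have h_inv := isBigO_inv_sub_const_inv_cobounded a
    have h_remainder := ih.mul h_inv
    have h_new_term :=
      ((isBigO_refl (fun x : 𝕜 => x⁻¹ ^ (k + 2)) (cobounded 𝕜)).mul h_inv).const_mul_left
        ((k + 1) * a ^ 2)
    refine (h_remainder.add h_new_term).congr' ?_ (.of_forall fun x => (pow_succ x⁻¹ (k + 2)).symm)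
    filter_upwards [eventually_ne_cobounded 0, eventually_ne_cobounded a] with x hx hxa
    push_cast
    linear_combination
      (x⁻¹ ^ k + (k + 1) * a * x⁻¹ ^ (k + 1)) * -inv_eq_inv_add_mul_inv_sub hx hxa

lemma isBigO_inv_sub_const_pow_sub_inv_pow_cobounded (a : 𝕜) (k : ℕ) :
    (fun x => (x - a)⁻¹ ^ k - x⁻¹ ^ k) =O[cobounded 𝕜] (fun x => x⁻¹ ^ (k + 1)) := by
  have h_remainder := (inv_sub_const_pow_expansion_cobounded a k).trans
    (isLittleO_inv_pow_inv_pow_cobounded (k + 1).lt_succ_self).isBigO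
  have h_first_order :=
    (isBigO_refl (fun x : 𝕜 => x⁻¹ ^ (k + 1)) (cobounded 𝕜)).const_mul_left (k * a)
  exact (h_remainder.add h_first_order).congr_left fun x => by ring

end InversePowers

section Sine

lemma isBigO_sin_sub_cubic_nhds_zero :
    (fun x : ℝ => sin x - (x - x ^ 3 / 6)) =O[nhds 0] (fun x => x ^ 5) := by
  refine IsBigO.of_bound (1 / 100) ?_
  filter_upwards [Metric.closedBall_mem_nhds (0 : ℝ) one_pos] with x hx
  have hx_abs : |x| ≤ 1 := by simpa using hx
  simpa [div_eq_inv_mul] using sin_bound hx_abs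

lemma sin_div_expansion_cobounded (c : ℝ) :
    (fun x => sin (c / x) - (c * x⁻¹ - c ^ 3 / 6 * x⁻¹ ^ 3)) =O[cobounded ℝ]
      (fun x => x⁻¹ ^ 5) := by
  have h_tendsto : Tendsto (fun x : ℝ => c * x⁻¹) (cobounded ℝ) (nhds 0) := by
    simpa using tendsto_inv₀_cobounded.const_mul c
  have h_pow : (fun x : ℝ => (c * x⁻¹) ^ 5) =O[cobounded ℝ] (fun x => x⁻¹ ^ 5) :=
    (isBigO_const_mul_self c _ _).pow 5
  refine ((isBigO_sin_sub_cubic_nhds_zero.comp_tendsto h_tendsto).trans h_pow).congr_left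
    fun x => ?_
  simp only [Function.comp_apply, div_eq_mul_inv c x]
  ring

lemma mul_sin_div_expansion_cobounded (c : ℝ) :
    (fun x => x * sin (c / x) - (c - c ^ 3 / 6 * x⁻¹ ^ 2)) =O[cobounded ℝ]
      (fun x => x⁻¹ ^ 4) := by
  refine ((isBigO_refl (fun x : ℝ => x) _).mul (sin_div_expansion_cobounded c)).congr' ?_ ?_ <;>
  · filter_upwards [eventually_ne_cobounded 0] with x hx
    field_simp

end Sine

section Perimeter

variable (θ : ℝ)

/-- For `θ = π`, the perimeter of the polygon `R_m^+`: the added vertex replaces one of the `m`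
sides `2 sin (π / (2 m))` of the regular small `m`-gon by two sides `2 sin (π / (4 m))`. The
expansion at infinity makes sense for every real `m` and with `π` replaced by any real `θ`. -/
noncomputable def perimeterRplus (m : ℝ) : ℝ :=
  2 * m * sin (θ / (2 * m)) + 4 * sin (θ / (4 * m)) - 2 * sin (θ / (2 * m))

lemma perimeterRplus_expansion_cobounded :
    (fun m => perimeterRplus θ m - (θ - θ ^ 3 / 24 * m⁻¹ ^ 2 + θ ^ 3 / 32 * m⁻¹ ^ 3))
      =O[cobounded ℝ] (fun m => m⁻¹ ^ 4) := by
  have h_order : (fun m : ℝ => m⁻¹ ^ 5) =O[cobounded ℝ] (fun m => m⁻¹ ^ 4) :=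
    (isLittleO_inv_pow_inv_pow_cobounded (by norm_num)).isBigO
  have h_regular := (mul_sin_div_expansion_cobounded (θ / 2)).const_mul_left 2
  have h_new_sides := ((sin_div_expansion_cobounded (θ / 4)).trans h_order).const_mul_left 4
  have h_old_side := ((sin_div_expansion_cobounded (θ / 2)).trans h_order).const_mul_left 2
  refine ((h_regular.add h_new_sides).sub h_old_side).congr_left fun m => ?_
  simp only [perimeterRplus, ← div_div]
  ring

lemma perimeterRplus_sub_one_expansion_cobounded :
    (fun x => perimeterRplus θ (x - 1) -
        (θ - θ ^ 3 / 24 * x⁻¹ ^ 2 - 5 * θ ^ 3 / 96 * x⁻¹ ^ 3)) =O[cobounded ℝ]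
      (fun x => x⁻¹ ^ 4) := by
  have h_perimeter := ((perimeterRplus_expansion_cobounded θ).comp_tendsto
    (tendsto_sub_const_cobounded 1)).trans ((isBigO_inv_sub_const_inv_cobounded 1).pow 4)
  have h_square :=
    (inv_sub_const_pow_expansion_cobounded (1 : ℝ) 2).const_mul_left (θ ^ 3 / 24)
  have h_cube :=
    (isBigO_inv_sub_const_pow_sub_inv_pow_cobounded (1 : ℝ) 3).const_mul_left (θ ^ 3 / 32)
  refine ((h_perimeter.sub h_square).add h_cube).congr_left fun x => ?_
  simp only [Function.comp_apply, Nat.cast_ofNat]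
  ring

theorem perimeter_gap_Rplus_asymptotics_general :
    (fun x : ℝ =>
        2 * x * sin (θ / (2 * x)) -
          (2 * x - 2) * sin (θ / (2 * x - 2)) -
          4 * sin (θ / (4 * x - 4)) + 2 * sin (θ / (2 * x - 2)) -
          5 * θ ^ 3 / (96 * x ^ 3)) =O[cobounded ℝ]
      (fun x => 1 / x ^ 4) := by
  have h_bound := (mul_sin_div_expansion_cobounded (θ / 2)).const_mul_left 2
  have h_perimeter := perimeterRplus_sub_one_expansion_cobounded θ
  refine (h_bound.sub h_perimeter).congr (fun x => ?_) (by simp)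
  have h_two : 2 * x - 2 = 2 * (x - 1) := by ring
  have h_four : 4 * x - 4 = 4 * (x - 1) := by ring
  simp only [perimeterRplus, h_two, h_four, div_div]
  ring

end Perimeter

/-- Asymptotics of the perimeter gap for the polygon `R_{n-1}^+`:
`2n sin(π/2n) − L(R_{n-1}^+) = 5π³/(96 n³) + O(1/n⁴)` as `n → ∞`. -/
theorem perimeter_gap_Rplus_asymptotics :
    (fun n : ℕ =>
        2 * n * sin (π / (2 * n)) -
          (2 * (n : ℝ) - 2) * sin (π / (2 * (n : ℝ) - 2)) -
          4 * sin (π / (4 * (n : ℝ) - 4)) + 2 * sin (π / (2 * (n : ℝ) - 2)) -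
          5 * π ^ 3 / (96 * (n : ℝ) ^ 3)) =O[atTop]
      (fun n : ℕ => 1 / (n : ℝ) ^ 4) :=
  (perimeter_gap_Rplus_asymptotics_general π).comp_tendsto tendsto_natCast_atTop_cobounded
end

section
/- As n → ∞ over the integers n ≥ 2, cos(π/(2n)) − cos(π/(2n−2)) = π²/(4n³) + O(1/n⁴); that is, the function n ↦ cos(π/(2n)) − cos(π/(2n−2)) − π²/(4n³) is O(n⁻⁴) along the filter atTop. -/
open Real Filter Asymptotics

/-!
With `u = 1 / x` and `v = 1 / (x - s)`, the relation `v - u = s * u * v` gives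
`v ^ 2 - u ^ 2 - 2 * s * u ^ 3 = s ^ 2 * u ^ 2 * v * (v + 2 * u)`, which is `O(u ^ 4)` because
`v = O(u)`. Since `cos y = 1 - y ^ 2 / 2 + O(y ^ 4)`, the difference `cos (c * u) - cos (c * v)` is
`c ^ 2 / 2 * (v ^ 2 - u ^ 2) + O(u ^ 4) = c ^ 2 * s * u ^ 3 + O(u ^ 4)`.
The polygon widths are the case `c = π / 2`, `s = 1`.
-/

open Bornology
open scoped Topology

theorem inv_sub_sq_sub_inv_sq_sub {K : Type*} [Field K] {x s : K} (hx : x ≠ 0) (hxs : x - s ≠ 0) :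
    (x - s)⁻¹ ^ 2 - x⁻¹ ^ 2 - 2 * s * x⁻¹ ^ 3 =
      s ^ 2 * x⁻¹ ^ 2 * (x - s)⁻¹ * ((x - s)⁻¹ + 2 * x⁻¹) := by
  have h : (x - s)⁻¹ - x⁻¹ = s * x⁻¹ * (x - s)⁻¹ := by field_simp; ring
  linear_combination ((x - s)⁻¹ + x⁻¹ + s * x⁻¹ * ((x - s)⁻¹ + 2 * x⁻¹)) * h

section NormedField

variable {𝕜 : Type*} [NormedField 𝕜]

theorem isBigO_inv_sub_const_cobounded (s : 𝕜) :
    (fun x : 𝕜 ↦ (x - s)⁻¹) =O[cobounded 𝕜] fun x ↦ x⁻¹ := by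
  have h : (fun x : 𝕜 ↦ x - s) ~[cobounded 𝕜] fun x ↦ x :=
    IsEquivalent.refl.sub_isLittleO (isLittleO_const_id_cobounded s)
  exact h.inv.isBigO

theorem isBigO_inv_sub_sq_sub_inv_sq_sub_cobounded (s : 𝕜) :
    (fun x : 𝕜 ↦ (x - s)⁻¹ ^ 2 - x⁻¹ ^ 2 - 2 * s * x⁻¹ ^ 3) =O[cobounded 𝕜]
      fun x ↦ x⁻¹ ^ 4 := by
  have hv := isBigO_inv_sub_const_cobounded s
  have hu : (fun x : 𝕜 ↦ x⁻¹) =O[cobounded 𝕜] fun x ↦ x⁻¹ := isBigO_refl _ _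
  have hprod := (((hu.pow 2).const_mul_left (s ^ 2)).mul hv).mul (hv.add (hu.const_mul_left 2))
  refine hprod.congr' ?_ (.of_forall fun x ↦ by ring)
  filter_upwards [eventually_ne_cobounded 0, eventually_ne_cobounded s] with x hx hxs
  exact (inv_sub_sq_sub_inv_sq_sub hx (sub_ne_zero.mpr hxs)).symm

end NormedField

theorem isBigO_cos_sub_one_sub_sq_div_two :
    (fun y : ℝ ↦ cos y - (1 - y ^ 2 / 2)) =O[𝓝 0] fun y ↦ y ^ 4 := by
  refine .of_bound (5 / 96) ?_
  filter_upwards [Metric.closedBall_mem_nhds (0 : ℝ) one_pos] with y hy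
  have hy : |y| ≤ 1 := by simpa using hy
  simpa [mul_comm] using cos_bound hy

theorem isBigO_cos_div_sub_const_cobounded (c s : ℝ) :
    (fun x : ℝ ↦ cos (c / (x - s)) - (1 - (c / (x - s)) ^ 2 / 2)) =O[cobounded ℝ]
      fun x ↦ x⁻¹ ^ 4 := by
  have hO : (fun x : ℝ ↦ c / (x - s)) =O[cobounded ℝ] fun x ↦ x⁻¹ := by
    simpa only [div_eq_mul_inv] using (isBigO_inv_sub_const_cobounded s).const_mul_left c
  have hlim : Tendsto (fun x : ℝ ↦ c / (x - s)) (cobounded ℝ) (𝓝 0) :=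
    hO.trans_tendsto tendsto_inv₀_cobounded
  exact (isBigO_cos_sub_one_sub_sq_div_two.comp_tendsto hlim).trans (hO.pow 4)

theorem width_gap_Rplus_asymptotics_general (c s : ℝ) :
    (fun x : ℝ ↦ cos (c / x) - cos (c / (x - s)) - c ^ 2 * s / x ^ 3) =O[cobounded ℝ]
      fun x ↦ 1 / x ^ 4 := by
  have hu := isBigO_cos_div_sub_const_cobounded c 0
  have hv := isBigO_cos_div_sub_const_cobounded c s
  have hsq := (isBigO_inv_sub_sq_sub_inv_sq_sub_cobounded s).const_mul_left (c ^ 2 / 2)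
  refine ((hu.sub hv).add hsq).congr (fun x ↦ ?_) (fun x ↦ by simp)
  simp only [sub_zero]
  ring

/-- Asymptotics of the width gap for the polygon `R_{n-1}^+`:
`cos(π/2n) − cos(π/(2n−2)) = π²/(4n³) + O(1/n⁴)` as `n → ∞`. -/
theorem width_gap_Rplus_asymptotics :
    (fun n : ℕ =>
        cos (π / (2 * n)) - cos (π / (2 * (n : ℝ) - 2)) -
          π ^ 2 / (4 * (n : ℝ) ^ 3)) =O[atTop]
      (fun n : ℕ => 1 / (n : ℝ) ^ 4) := by
  exact ((width_gap_Rplus_asymptotics_general (π / 2) 1).comp_tendsto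
    tendsto_natCast_atTop_cobounded).congr_left fun n ↦ by
      norm_num [div_div, div_pow, mul_sub]
end

section
/- As n → ∞ over the positive integers, (1/(2n))·tan(π/(2n) − (1/2)·arcsin((1/2)·sin(2π/n))) = π³/(8n⁴) + O(1/n⁶); that is, the function n ↦ (1/(2n))·tan(π/(2n) − (1/2)·arcsin((1/2)·sin(2π/n))) − π³/(8n⁴) is O(n⁻⁶) along the filter atTop. -/
open Real Filter Asymptotics

/-!
Write `h = π / (2n)` and let `u = h - arcsin (sin (4h) / 2) / 2` be the angle whose tangent is to
be estimated. Then `sin (2 (h - u)) = sin (4h) / 2`, which in terms of `τ = tan h` and `T = tan u`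
is the quadratic equation `2τT² + (1 - τ⁴)T = 2τ³`. Since `T → 0` as `τ → 0`, the linear term
dominates: first `T = O(τ³)`, and feeding this back into the equation gives `T = 2τ³ + O(τ⁷)`.
As `τ = h + O(h³)`, this is `2h³ + O(h⁵)`.
-/

open scoped Topology

theorem isBigO_sub_pow_succ_of_hasDerivAt {𝕜 E : Type*} [RCLike 𝕜] [NormedAddCommGroup E]
    [NormedSpace 𝕜 E] {f f' : 𝕜 → E} {a : 𝕜} {n : ℕ}
    (hf : ∀ᶠ x in 𝓝 a, HasDerivAt f (f' x) x)
    (hf' : f' =O[𝓝 a] fun x => (x - a) ^ n) :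
    (fun x => f x - f a) =O[𝓝 a] fun x => (x - a) ^ (n + 1) := by
  obtain ⟨C, hC, hbound⟩ := hf'.exists_pos
  obtain ⟨ε, hε, hball⟩ := Metric.eventually_nhds_iff_ball.1 (hf.and hbound.bound)
  refine IsBigO.of_bound C ?_
  filter_upwards [Metric.ball_mem_nhds a hε] with x hx
  have hsub : Metric.closedBall a ‖x - a‖ ⊆ Metric.ball a ε :=
    Metric.closedBall_subset_ball (mem_ball_iff_norm.1 hx)
  have hderiv : ∀ y ∈ Metric.closedBall a ‖x - a‖, ‖f' y‖ ≤ C * ‖x - a‖ ^ n := fun y hy =>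
    calc ‖f' y‖ ≤ C * ‖y - a‖ ^ n := by simpa only [norm_pow] using (hball y (hsub hy)).2
      _ ≤ C * ‖x - a‖ ^ n := by gcongr; exact mem_closedBall_iff_norm.1 hy
  calc ‖f x - f a‖ ≤ C * ‖x - a‖ ^ n * ‖x - a‖ :=
        (convex_closedBall a ‖x - a‖).norm_image_sub_le_of_norm_hasDerivWithin_le
          (fun y hy => (hball y (hsub hy)).1.hasDerivWithinAt) hderiv
          (Metric.mem_closedBall_self (norm_nonneg _)) (mem_closedBall_iff_norm.2 le_rfl)
    _ = C * ‖(x - a) ^ (n + 1)‖ := by rw [norm_pow, pow_succ, mul_assoc]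

theorem isBigO_pow_succ_sub_pow_succ {α R 𝕜 : Type*} [SeminormedCommRing R] [NormedField 𝕜]
    {l : Filter α} {f g : α → R} {u v : α → 𝕜} (hf : f =O[l] u) (hg : g =O[l] u)
    (hfg : (fun x => f x - g x) =O[l] v) (n : ℕ) :
    (fun x => f x ^ (n + 1) - g x ^ (n + 1)) =O[l] fun x => u x ^ n * v x := by
  have hsum : (fun x => ∑ i ∈ Finset.range (n + 1), f x ^ i * g x ^ (n - i))
      =O[l] fun x => u x ^ n :=
    IsBigO.fun_sum fun i hi => ((hf.pow i).mul (hg.pow (n - i))).congr_right fun x => by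
      rw [← pow_add, Nat.add_sub_cancel' (Finset.mem_range_succ_iff.1 hi)]
  exact (hsum.mul hfg).congr_left fun x => geom_sum₂_mul (f x) (g x) (n + 1)

theorem isBigO_sub_two_mul_cube_of_quadratic {α 𝕜 : Type*} [NormedField 𝕜] {l : Filter α}
    {τ T : α → 𝕜} (hτ : Tendsto τ l (𝓝 0)) (hT : Tendsto T l (𝓝 0))
    (heq : ∀ᶠ x in l, 2 * τ x * T x ^ 2 + (1 - τ x ^ 4) * T x = 2 * τ x ^ 3) :
    (fun x => T x - 2 * τ x ^ 3) =O[l] fun x => τ x ^ 7 := by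
  have hfactor : Tendsto (fun x => 2 * τ x * T x + (1 - τ x ^ 4)) l (𝓝 1) := by
    simpa using ((hτ.const_mul 2).mul hT).add ((hτ.pow 4).const_sub 1)
  have hcube : T =O[l] fun x => τ x ^ 3 := by
    have hinv := ((hfactor.inv₀ one_ne_zero).isBigO_one 𝕜).mul
      (isBigO_const_mul_self 2 (fun x => τ x ^ 3) l)
    refine hinv.congr' ?_ (.of_forall fun x => one_mul _)
    filter_upwards [heq, hfactor.eventually_ne one_ne_zero] with x hx hne
    rw [inv_mul_eq_iff_eq_mul₀ hne, ← hx]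
    ring
  have hlinear : (fun x => τ x ^ 4 * T x) =O[l] fun x => τ x ^ 7 :=
    ((isBigO_refl (fun x => τ x ^ 4) l).mul hcube).congr_right fun x => by ring
  have hsquare : (fun x => 2 * τ x * T x ^ 2) =O[l] fun x => τ x ^ 7 :=
    ((isBigO_const_mul_self 2 τ l).mul (hcube.pow 2)).congr_right fun x => by ring
  refine (hlinear.sub hsquare).congr' ?_ .rfl
  filter_upwards [heq] with x hx
  linear_combination -hx

theorem tan_isBigO_id : tan =O[𝓝 0] fun x : ℝ => x := by
  simpa only [tan_zero, sub_zero] using (hasDerivAt_tan (x := 0) (by simp)).isBigO_sub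

theorem eventually_cos_ne_zero : ∀ᶠ x : ℝ in 𝓝 0, cos x ≠ 0 :=
  continuous_cos.continuousAt.eventually_ne (by simp)

theorem tan_sub_id_isBigO_cube : (fun x : ℝ => tan x - x) =O[𝓝 0] fun x => x ^ 3 := by
  have hderiv : ∀ᶠ x : ℝ in 𝓝 0, HasDerivAt (fun y => tan y - y) (tan x ^ 2) x := by
    filter_upwards [eventually_cos_ne_zero] with x hx
    refine ((hasDerivAt_tan hx).fun_sub (hasDerivAt_id' x)).congr_deriv ?_
    rw [one_div, ← inv_one_add_tan_sq hx, inv_inv, add_sub_cancel_left]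
  simpa using isBigO_sub_pow_succ_of_hasDerivAt hderiv
    (by simpa only [sub_zero] using tan_isBigO_id.pow 2)

theorem tan_cube_sub_cube_isBigO : (fun x : ℝ => tan x ^ 3 - x ^ 3) =O[𝓝 0] fun x => x ^ 5 :=
  (isBigO_pow_succ_sub_pow_succ tan_isBigO_id (isBigO_refl _ _)
    tan_sub_id_isBigO_cube 2).congr_right fun x => (pow_add x 2 3).symm

theorem tan_quadratic_of_sin_two_mul_sub {h u : ℝ} (hh : cos h ≠ 0) (hu : cos u ≠ 0)
    (hsin : sin (2 * (h - u)) = 1 / 2 * sin (4 * h)) :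
    2 * tan h * tan u ^ 2 + (1 - tan h ^ 4) * tan u = 2 * tan h ^ 3 := by
  have hpoly : (sin h * cos u - cos h * sin u) * (cos h * cos u + sin h * sin u) =
      sin h * cos h * (cos h ^ 2 - sin h ^ 2) := by
    rw [sin_two_mul, sin_sub, cos_sub, show 4 * h = 2 * (2 * h) by ring, sin_two_mul (2 * h),
      sin_two_mul h, cos_two_mul'] at hsin
    linear_combination hsin / 2
  rw [tan_eq_sin_div_cos, tan_eq_sin_div_cos]
  field_simp
  -- `hpoly` is made homogeneous in `h` and in `u` by inserting factors `sin² + cos² = 1`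
  linear_combination -(cos h ^ 2 + sin h ^ 2) * hpoly +
    sin h * cos h * (cos h ^ 2 - sin h ^ 2) * (sin_sq_add_cos_sq u - sin_sq_add_cos_sq h)

/-- The angle whose tangent, divided by `2n`, is the width gap of the unit-perimeter rescaling of
`B_n`, as a function of `h = π / (2n)`. -/
noncomputable def gapAngle (h : ℝ) : ℝ :=
  h - (1 / 2) * arcsin ((1 / 2) * sin (4 * h))

theorem sin_two_mul_sub_gapAngle (h : ℝ) : sin (2 * (h - gapAngle h)) = 1 / 2 * sin (4 * h) := by
  have hangle : 2 * (h - gapAngle h) = arcsin (1 / 2 * sin (4 * h)) := by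
    rw [gapAngle]
    ring
  rw [hangle, sin_arcsin] <;> linarith [neg_one_le_sin (4 * h), sin_le_one (4 * h)]

theorem tendsto_gapAngle : Tendsto gapAngle (𝓝 0) (𝓝 0) := by
  have hcont : Continuous gapAngle := by
    unfold gapAngle
    fun_prop
  simpa [gapAngle] using hcont.tendsto 0

theorem tan_gapAngle_quadratic : ∀ᶠ h in 𝓝 0,
    2 * tan h * tan (gapAngle h) ^ 2 + (1 - tan h ^ 4) * tan (gapAngle h) = 2 * tan h ^ 3 := by
  filter_upwards [eventually_cos_ne_zero, tendsto_gapAngle.eventually eventually_cos_ne_zero]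
    with h hh hu
  exact tan_quadratic_of_sin_two_mul_sub hh hu (sin_two_mul_sub_gapAngle h)

theorem tan_gapAngle_sub_isBigO :
    (fun h => tan (gapAngle h) - 2 * h ^ 3) =O[𝓝 0] fun h => h ^ 5 := by
  have htan : Tendsto tan (𝓝 0) (𝓝 0) := tan_isBigO_id.trans_tendsto tendsto_id
  have hroot : (fun h => tan (gapAngle h) - 2 * tan h ^ 3) =O[𝓝 0] fun h => h ^ 5 :=
    (isBigO_sub_two_mul_cube_of_quadratic htan (htan.comp tendsto_gapAngle)
      tan_gapAngle_quadratic).trans <|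
        (tan_isBigO_id.pow 7).trans (isLittleO_pow_pow (by norm_num)).isBigO
  exact (hroot.add (tan_cube_sub_cube_isBigO.const_mul_left 2)).congr_left fun h => by ring

/-- Asymptotics of the width gap for the unit-perimeter rescaling of `B_n`:
`(1/(2n)) tan(π/(2n) − (1/2) arcsin((1/2) sin(2π/n))) = π³/(8n⁴) + O(1/n⁶)` as `n → ∞`. -/
theorem width_gap_unit_perimeter_Bn_asymptotics :
    (fun n : ℕ =>
        (1 / (2 * (n : ℝ))) *
          tan (π / (2 * n) - (1 / 2) * arcsin ((1 / 2) * sin (2 * π / n))) -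
          π ^ 3 / (8 * (n : ℝ) ^ 4)) =O[atTop]
      (fun n : ℕ => 1 / (n : ℝ) ^ 6) := by
  have hangle : Tendsto (fun n : ℕ => π / (2 * n)) atTop (𝓝 0) := by
    simpa only [div_div] using tendsto_const_div_atTop_nhds_zero_nat (π / 2)
  have hgap := (isBigO_refl (fun n : ℕ => 1 / (2 * (n : ℝ))) atTop).mul
    (tan_gapAngle_sub_isBigO.comp_tendsto hangle)
  have hrate : (fun n : ℕ => 1 / (2 * (n : ℝ)) * (π / (2 * n)) ^ 5) =O[atTop]
      fun n : ℕ => 1 / (n : ℝ) ^ 6 :=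
    (isBigO_const_mul_self (π ^ 5 / 64) _ _).congr_left fun n => by ring
  refine (hgap.trans hrate).congr_left fun n => ?_
  have hfour : 4 * (π / (2 * n)) = 2 * π / n := by ring
  simp only [Function.comp_apply, gapAngle, hfour]
  ring
end
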